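/- Let n ≥ 2, α ∈ (0, 1/n), and let X = (X_1,…,X_n) follow an α-concentration-exclusion (α-CE) model. Then DQ^VaR_α(X) = n. -/

import Mathlib

open MeasureTheory ProbabilityTheory Filter Set

namespace DQ

variable {Ω : Type*} [MeasurableSpace Ω]

/-- An atomless probability measure: every non-null measurable set has a measurable
subset of strictly smaller positive measure. -/
def Atomless (P : Measure Ω) : Prop :=
  ∀ A : Set Ω, MeasurableSet A → 0 < P A →
    ∃ B, MeasurableSet B ∧ B ⊆ A ∧ 0 < P B ∧ P B < P A

/-- Value-at-Risk at level `α` (small-`α` convention):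
`VaR_α(X) = inf {x | P(X ≤ x) ≥ 1 - α}`. -/
noncomputable def VaR (P : Measure Ω) (α : ℝ) (X : Ω → ℝ) : ℝ :=
  sInf {x : ℝ | 1 - α ≤ (P {ω | X ω ≤ x}).toReal}

/-- Expected Shortfall at level `α`: `ES_α(X) = (1/α) ∫_0^α VaR_β(X) dβ`. -/
noncomputable def ES (P : Measure Ω) (α : ℝ) (X : Ω → ℝ) : ℝ :=
  (1 / α) * ∫ β in Set.Ioo (0 : ℝ) α, VaR P β X

/-- `α* = inf {β ∈ (0,1) | VaR_β(∑ Xᵢ) ≤ ∑ VaR_α(Xᵢ)}`, with `inf ∅ = 1`. -/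
noncomputable def alphaStarVaR (P : Measure Ω) (α : ℝ) {n : ℕ} (X : Fin n → Ω → ℝ) : ℝ :=
  sInf ({β ∈ Set.Ioo (0 : ℝ) 1 |
    VaR P β (fun ω => ∑ i, X i ω) ≤ ∑ i, VaR P α (X i)} ∪ {1})

/-- Diversification quotient based on VaR: `DQ^VaR_α(X) = α*/α`. -/
noncomputable def DQVaR (P : Measure Ω) (α : ℝ) {n : ℕ} (X : Fin n → Ω → ℝ) : ℝ :=
  alphaStarVaR P α X / α

/-- `α* = inf {β ∈ (0,1) | ES_β(∑ Xᵢ) ≤ ∑ ES_α(Xᵢ)}`, with `inf ∅ = 1`. -/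
noncomputable def alphaStarES (P : Measure Ω) (α : ℝ) {n : ℕ} (X : Fin n → Ω → ℝ) : ℝ :=
  sInf ({β ∈ Set.Ioo (0 : ℝ) 1 |
    ES P β (fun ω => ∑ i, X i ω) ≤ ∑ i, ES P α (X i)} ∪ {1})

/-- Diversification quotient based on ES: `DQ^ES_α(X) = α*/α`. -/
noncomputable def DQES (P : Measure Ω) (α : ℝ) {n : ℕ} (X : Fin n → Ω → ℝ) : ℝ :=
  alphaStarES P α X / α

end DQ

namespace DQ

variable {Ω : Type*} [MeasurableSpace Ω]

/-- `A` is a tail event of `X`: `0 < P(A) < 1` and, off a null set,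
`X(ω) ≥ X(ω')` for all `ω ∈ A` and `ω' ∈ Aᶜ`. -/
def TailEvent (P : Measure Ω) (X : Ω → ℝ) (A : Set Ω) : Prop :=
  MeasurableSet A ∧ 0 < P A ∧ P A < 1 ∧
  ∃ N : Set Ω, P N = 0 ∧ ∀ ω ∈ A \ N, ∀ ω' ∈ Aᶜ \ N, X ω' ≤ X ω

/-- `(X₁,…,Xₙ)` is `α`-concentrated: the components share a common tail event of
probability `α`. -/
def Concentrated (P : Measure Ω) {n : ℕ} (X : Fin n → Ω → ℝ) (α : ℝ) : Prop :=
  ∃ A : Set Ω, P A = ENNReal.ofReal α ∧ ∀ i, TailEvent P (X i) A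

end DQ

namespace DQ

variable {Ω : Type*} [MeasurableSpace Ω]

/-- The `α`-concentration-exclusion (`α`-CE) model, for `α ∈ (0, 1/n)`. -/
def CEModel (P : Measure Ω) {n : ℕ} (X : Fin n → Ω → ℝ) (α : ℝ) : Prop :=
  (∀ i, (P {ω | VaR P α (X i) < X i ω}).toReal = α) ∧
  (∀ i, (n : ℝ) * α ≤ (P {ω | VaR P α (X i) ≤ X i ω}).toReal) ∧
  (∀ i j, i ≠ j →
    P ({ω | VaR P α (X i) < X i ω} ∩ {ω | VaR P α (X j) < X j ω}) = 0) ∧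
  Concentrated P X ((n : ℝ) * α)

end DQ

/-! For every random vector, `α* = P(∑ Xᵢ > ∑ VaR_α(Xᵢ))`: right-continuity of the distribution
function turns `VaR_β(S) ≤ s` into `P(S > s) ≤ β`. In the CE model each exceedance event
`{Xᵢ > VaR_α(Xᵢ)}` lies in the common tail event `A`, on which every `Xⱼ` is at least
`VaR_α(Xⱼ)`. Hence the sum exceeds `∑ VaR_α(Xᵢ)` as soon as one component exceeds its own VaR, so
the aggregate exceedance is a.s. the union of `n` mutually exclusive events of probability `α`. -/

namespace DQ

section ValueAtRisk

lemma sInf_setOf_le_stieltjesFunction_le_iff (F : StieltjesFunction ℝ) {p x : ℝ}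
    (hne : {y | p ≤ F y}.Nonempty) (hbdd : BddBelow {y | p ≤ F y}) :
    sInf {y | p ≤ F y} ≤ x ↔ p ≤ F x := by
  refine ⟨fun hle => ?_, fun hx => csInf_le hbdd hx⟩
  have hright : Tendsto F (nhdsWithin x (Ioi x)) (nhds (F x)) :=
    (F.right_continuous x).mono_left (nhdsWithin_mono x Ioi_subset_Ici_self)
  refine ge_of_tendsto hright ?_
  filter_upwards [self_mem_nhdsWithin] with z hz
  obtain ⟨y, hy, hyz⟩ := exists_lt_of_csInf_lt hne (hle.trans_lt hz)
  exact hy.trans (F.mono hyz.le)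

lemma sInf_setOf_le_cdf_le_iff (μ : Measure ℝ) {p x : ℝ} (hp : p ∈ Ioo (0 : ℝ) 1) :
    sInf {y | p ≤ cdf μ y} ≤ x ↔ p ≤ cdf μ x := by
  refine sInf_setOf_le_stieltjesFunction_le_iff (cdf μ) ?_ ?_
  · exact ((tendsto_cdf_atTop μ).eventually_const_le hp.2).exists
  · obtain ⟨z, hz⟩ := ((tendsto_cdf_atBot μ).eventually_lt_const hp.1).exists
    exact ⟨z, fun y hy => ((monotone_cdf μ).reflect_lt (hz.trans_le hy)).le⟩

variable {Ω : Type*} [MeasurableSpace Ω] {P : Measure Ω} [IsProbabilityMeasure P]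

lemma cdf_map_eq_measureReal {X : Ω → ℝ} (hX : AEMeasurable X P) (x : ℝ) :
    cdf (P.map X) x = P.real {ω | X ω ≤ x} := by
  have := Measure.isProbabilityMeasure_map hX
  rw [cdf_eq_real, map_measureReal_apply_of_aemeasurable hX measurableSet_Iic]
  rfl

theorem VaR_le_iff {X : Ω → ℝ} (hX : AEMeasurable X P) {β : ℝ} (hβ : β ∈ Ioo (0 : ℝ) 1) {x : ℝ} :
    VaR P β X ≤ x ↔ P.real {ω | x < X ω} ≤ β := by
  have hcompl : P.real {ω | x < X ω} = 1 - P.real {ω | X ω ≤ x} := by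
    rw [← probReal_compl_eq_one_sub₀ (nullMeasurableSet_le hX aemeasurable_const)]
    simp only [compl_ofPred, not_le]
  have hVaR : VaR P β X = sInf {y | 1 - β ≤ cdf (P.map X) y} := by
    simp only [VaR, cdf_map_eq_measureReal hX, Measure.real]
  rw [hVaR, sInf_setOf_le_cdf_le_iff _ (Ioo.one_sub_mem hβ), cdf_map_eq_measureReal hX, hcompl,
    sub_le_comm]

lemma sInf_Ioo_inter_Ici_union_one {p : ℝ} (hp : p ∈ Icc (0 : ℝ) 1) :
    sInf ({β ∈ Ioo (0 : ℝ) 1 | p ≤ β} ∪ {1}) = p := by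
  rcases hp.1.eq_or_lt with rfl | hpos
  · have hset : {β ∈ Ioo (0 : ℝ) 1 | 0 ≤ β} ∪ {1} = Ioc 0 1 := by
      ext β; grind
    rw [hset, csInf_Ioc one_pos]
  · have hset : {β ∈ Ioo (0 : ℝ) 1 | p ≤ β} ∪ {1} = Icc p 1 := by
      ext β; grind
    rw [hset, csInf_Icc hp.2]

theorem alphaStarVaR_eq_measureReal {n : ℕ} {X : Fin n → Ω → ℝ} (hX : ∀ i, AEMeasurable (X i) P)
    (α : ℝ) :
    alphaStarVaR P α X = P.real {ω | ∑ i, VaR P α (X i) < ∑ i, X i ω} := by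
  have hsum : AEMeasurable (fun ω => ∑ i, X i ω) P := Finset.aemeasurable_fun_sum _ fun i _ => hX i
  rw [← sInf_Ioo_inter_Ici_union_one ⟨measureReal_nonneg, measureReal_le_one⟩, alphaStarVaR]
  congr! 4 with β
  exact and_congr_right fun hβ => VaR_le_iff hsum hβ

end ValueAtRisk

section TailEvent

variable {Ω : Type*} [MeasurableSpace Ω] {P : Measure Ω} {X : Ω → ℝ} {A : Set Ω} {U : Set ℝ}

lemma TailEvent.ae_le_or_ae_ge_preimage (hA : TailEvent P X A) (hU : IsUpperSet U) :
    A ≤ᵐ[P] X ⁻¹' U ∨ X ⁻¹' U ≤ᵐ[P] A := by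
  obtain ⟨-, -, -, N, hN, hmono⟩ := hA
  by_contra! ⟨hnot_le, hnot_ge⟩
  rw [ae_le_set, ← measure_sdiff_null hN] at hnot_le hnot_ge
  obtain ⟨ω, ⟨hωA, hωU⟩, hωN⟩ := nonempty_of_measure_ne_zero hnot_le
  obtain ⟨ω', ⟨hω'U, hω'A⟩, hω'N⟩ := nonempty_of_measure_ne_zero hnot_ge
  exact hωU (hU (hmono ω ⟨hωA, hωN⟩ ω' ⟨hω'A, hω'N⟩) hω'U)

lemma TailEvent.ae_le_preimage (hA : TailEvent P X A) (hX : AEMeasurable X P) (hU : IsUpperSet U)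
    (hle : P A ≤ P (X ⁻¹' U)) : A ≤ᵐ[P] X ⁻¹' U := by
  rcases hA.ae_le_or_ae_ge_preimage hU with h | h
  · exact h
  · have hU_meas := hX.nullMeasurableSet_preimage hU.ordConnected.measurableSet
    exact (ae_eq_of_ae_subset_of_measure_ge h hle hU_meas hA.2.2.1.ne_top).symm.le

lemma TailEvent.preimage_ae_le (hA : TailEvent P X A) (hU : IsUpperSet U)
    (hle : P (X ⁻¹' U) ≤ P A) : X ⁻¹' U ≤ᵐ[P] A := by
  rcases hA.ae_le_or_ae_ge_preimage hU with h | h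
  · have hU_top := (hle.trans_lt hA.2.2.1).ne_top
    exact (ae_eq_of_ae_subset_of_measure_ge h hle hA.1.nullMeasurableSet hU_top).symm.le
  · exact h

end TailEvent

section CEModel

variable {Ω : Type*} [MeasurableSpace Ω] {P : Measure Ω} [IsProbabilityMeasure P] {n : ℕ}
  {X : Fin n → Ω → ℝ} {α : ℝ}

lemma CEModel.measure_iUnion_VaR_lt (hCE : CEModel P X α) (hX : ∀ i, AEMeasurable (X i) P) :
    P (⋃ i, {ω | VaR P α (X i) < X i ω}) = ENNReal.ofReal (n * α) := by
  obtain ⟨hprob, -, hexcl, -⟩ := hCE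
  have hmeas (i) : P {ω | VaR P α (X i) < X i ω} = ENNReal.ofReal α :=
    (ENNReal.ofReal_toReal (measure_ne_top _ _)).symm.trans (congrArg ENNReal.ofReal (hprob i))
  rw [measure_iUnion₀ (fun i j hij => hexcl i j hij)
    fun i => nullMeasurableSet_lt aemeasurable_const (hX i)]
  simp only [hmeas, tsum_fintype, Finset.sum_const, Finset.card_univ, Fintype.card_fin]
  rw [← ENNReal.ofReal_nsmul, nsmul_eq_mul]

lemma CEModel.ae_VaR_le_of_VaR_lt (hCE : CEModel P X α) (hX : ∀ i, AEMeasurable (X i) P)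
    (i j : Fin n) : ∀ᵐ ω ∂P, VaR P α (X i) < X i ω → VaR P α (X j) ≤ X j ω := by
  obtain ⟨A, hPA, hA⟩ := hCE.2.2.2
  have hPi : P {ω | VaR P α (X i) < X i ω} ≤ P A := by
    rw [hPA, ← hCE.measure_iUnion_VaR_lt hX]
    exact measure_mono (subset_iUnion (fun k => {ω | VaR P α (X k) < X k ω}) i)
  have hPj : P A ≤ P {ω | VaR P α (X j) ≤ X j ω} := by
    rw [hPA]
    exact ENNReal.ofReal_le_of_le_toReal (hCE.2.1 j)
  filter_upwards [(hA i).preimage_ae_le (isUpperSet_Ioi _) hPi,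
    (hA j).ae_le_preimage (hX j) (isUpperSet_Ici _) hPj] with ω hiA hAj hi
  exact hAj (hiA hi)

lemma CEModel.setOf_sum_VaR_lt_sum_ae_eq_iUnion (hCE : CEModel P X α)
    (hX : ∀ i, AEMeasurable (X i) P) :
    {ω | ∑ i, VaR P α (X i) < ∑ i, X i ω} =ᵐ[P] ⋃ i, {ω | VaR P α (X i) < X i ω} := by
  have hall : ∀ᵐ ω ∂P, ∀ i j, VaR P α (X i) < X i ω → VaR P α (X j) ≤ X j ω :=
    ae_all_iff.2 fun i => ae_all_iff.2 fun j => hCE.ae_VaR_le_of_VaR_lt hX i j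
  refine eventuallyEq_set.2 ?_
  filter_upwards [hall] with ω hω
  rw [mem_iUnion]
  constructor
  · intro hlt
    obtain ⟨i, -, hi⟩ := Finset.exists_lt_of_sum_lt hlt
    exact ⟨i, hi⟩
  · rintro ⟨i, hi⟩
    exact Finset.sum_lt_sum (fun j _ => hω i j hi) ⟨i, Finset.mem_univ i, hi⟩

end CEModel

end DQ

open DQ in
theorem stmt8_general {Ω : Type*} [MeasurableSpace Ω] {P : Measure Ω} [IsProbabilityMeasure P]
    {n : ℕ} {X : Fin n → Ω → ℝ} (hX : ∀ i, AEMeasurable (X i) P) {α : ℝ} (hα : 0 < α)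
    (hCE : CEModel P X α) :
    DQVaR P α X = n :=
  calc DQVaR P α X
      = P.real {ω | ∑ i, VaR P α (X i) < ∑ i, X i ω} / α := by
        rw [DQVaR, alphaStarVaR_eq_measureReal hX]
    _ = P.real (⋃ i, {ω | VaR P α (X i) < X i ω}) / α := by
        rw [measureReal_congr (hCE.setOf_sum_VaR_lt_sum_ae_eq_iUnion hX)]
    _ = n * α / α := by
        rw [Measure.real, hCE.measure_iUnion_VaR_lt hX, ENNReal.toReal_ofReal (by positivity)]
    _ = n := mul_div_cancel_right₀ _ hα.ne'

open DQ in
/-- If n ≥ 2, α ∈ (0, 1/n), and X follows an α-CE model, then DQ^VaR_α(X) = n. -/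
theorem stmt8 {Ω : Type*} [MeasurableSpace Ω] (P : Measure Ω) [IsProbabilityMeasure P]
    (hP : Atomless P) (n : ℕ) (hn : 2 ≤ n) (X : Fin n → Ω → ℝ)
    (hX : ∀ i, Measurable (X i)) (α : ℝ) (hα : α ∈ Set.Ioo (0 : ℝ) (1 / n))
    (hCE : CEModel P X α) :
    DQVaR P α X = n :=
  stmt8_general (fun i => (hX i).aemeasurable) hα.1 hCE
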